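/- Assume 𝒞 is compact with R = sup{Tr(X) : X ∈ 𝒞} < ∞. Let Y ∈ ℳ_p, let μ ∈ ℝ^m and S = C − 𝒜*(μ), and assume 2 S Y ∈ T_Yℳ_p (so that 2 S Y is the Riemannian gradient of f at Y). Let Ỹ = [Y | 0] ∈ ℝ^{n×(p+1)} be Y padded with one zero column; then Ỹ ∈ ℳ_{p+1}. Let λ = inf{2⟨Ż, S Ż⟩ : Ż ∈ T_Ỹℳ_{p+1}, ‖Ż‖ = 1} (the smallest eigenvalue of the Riemannian Hessian of f at Ỹ). Then the optimality gap at Y is bounded by 0 ≤ 2(Tr(C Y Yᵀ) − f*) ≤ √R · ‖2 S Y‖ − R · min(λ, 0). -/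

import Mathlib

open Matrix MeasureTheory

noncomputable section

/-- Frobenius inner product `⟨A, B⟩ = Tr(Aᵀ B)`. -/
def frobInner {n p : ℕ} (A B : Matrix (Fin n) (Fin p) ℝ) : ℝ := (Aᵀ * B).trace

/-- Frobenius norm. -/
def frobNorm {n p : ℕ} (A : Matrix (Fin n) (Fin p) ℝ) : ℝ := Real.sqrt (frobInner A A)

/-- The constraint map 𝒜, `𝒜(X) i = Tr(A i * X)`. -/
def Aop {n m : ℕ} (A : Fin m → Matrix (Fin n) (Fin n) ℝ) (X : Matrix (Fin n) (Fin n) ℝ) :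
    Fin m → ℝ := fun i => (A i * X).trace

/-- The adjoint 𝒜*, `𝒜*(μ) = ∑ i, μ i • A i`. -/
def Aadj {n m : ℕ} (A : Fin m → Matrix (Fin n) (Fin n) ℝ) (μ : Fin m → ℝ) :
    Matrix (Fin n) (Fin n) ℝ := ∑ i, μ i • A i

/-- The SDP feasible set 𝒞. -/
def sdpFeas {n m : ℕ} (A : Fin m → Matrix (Fin n) (Fin n) ℝ) (b : Fin m → ℝ) :
    Set (Matrix (Fin n) (Fin n) ℝ) := {X | X.IsSymm ∧ Aop A X = b ∧ X.PosSemidef}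

/-- Optimal value `f* = inf {Tr(C X) : X ∈ 𝒞}` of the SDP. -/
def fstar {n m : ℕ} (A : Fin m → Matrix (Fin n) (Fin n) ℝ) (b : Fin m → ℝ)
    (C : Matrix (Fin n) (Fin n) ℝ) : ℝ := sInf ((fun X => (C * X).trace) '' sdpFeas A b)

/-- The factorized feasible set `ℳ_p = {Y : 𝒜(Y Yᵀ) = b}`. -/
def facFeas {n m : ℕ} (A : Fin m → Matrix (Fin n) (Fin n) ℝ) (b : Fin m → ℝ) (p : ℕ) :
    Set (Matrix (Fin n) (Fin p) ℝ) := {Y | Aop A (Y * Yᵀ) = b}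

/-- Tangent space `T_Yℳ = {Ydot : 𝒜(Ydot Yᵀ + Y Ydotᵀ) = 0}`. -/
def tangentSet {n m p : ℕ} (A : Fin m → Matrix (Fin n) (Fin n) ℝ)
    (Y : Matrix (Fin n) (Fin p) ℝ) : Set (Matrix (Fin n) (Fin p) ℝ) :=
  {Ydot | Aop A (Ydot * Yᵀ + Y * Ydotᵀ) = 0}

/-- Second-order critical point of the factorized problem. -/
def IsSOCP {n m p : ℕ} (A : Fin m → Matrix (Fin n) (Fin n) ℝ) (b : Fin m → ℝ)
    (C : Matrix (Fin n) (Fin n) ℝ) (Y : Matrix (Fin n) (Fin p) ℝ) : Prop :=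
  Y ∈ facFeas A b p ∧ ∃ μ : Fin m → ℝ,
    (C - Aadj A μ) * Y = 0 ∧
    ∀ Ydot ∈ tangentSet A Y, 0 ≤ frobInner Ydot ((C - Aadj A μ) * Ydot)

/-- The real vector space of symmetric `n × n` matrices. -/
def symmSpace (n : ℕ) : Submodule ℝ (Matrix (Fin n) (Fin n) ℝ) where
  carrier := {X | X.IsSymm}
  add_mem' := fun ha hb => ha.add hb
  zero_mem' := Matrix.isSymm_zero
  smul_mem' := fun c X hX => by
    show (c • X)ᵀ = c • X
    rw [Matrix.transpose_smul, hX]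

instance (n : ℕ) : MeasurableSpace ↥(symmSpace n) := borel _

/-- A set of symmetric matrices is null if it has measure zero for every additive Haar
measure on the finite-dimensional real vector space of symmetric `n × n` matrices. -/
def IsNullSymmSet (n : ℕ) (S : Set (Matrix (Fin n) (Fin n) ℝ)) : Prop :=
  ∀ μ : Measure ↥(symmSpace n), μ.IsAddHaarMeasure →
    μ {C : ↥(symmSpace n) | (C : Matrix (Fin n) (Fin n) ℝ) ∈ S} = 0

lemma aux_frobInner_sum {n p : ℕ} (A B : Matrix (Fin n) (Fin p) ℝ) :
    frobInner A B = ∑ x : Fin n × Fin p, A x.1 x.2 * B x.1 x.2 := by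
  rw [Fintype.sum_prod_type_right]
  simp [frobInner, Matrix.trace, Matrix.mul_apply]

lemma aux_cs {n p : ℕ} (A B : Matrix (Fin n) (Fin p) ℝ) :
    frobInner A B ≤ frobNorm A * frobNorm B := by
  have := Real.sum_mul_le_sqrt_mul_sqrt Finset.univ
    (fun x : Fin n × Fin p => A x.1 x.2) (fun x => B x.1 x.2)
  simpa [frobNorm, aux_frobInner_sum, pow_two] using this

lemma aux_bdd {n q : ℕ} (S : Matrix (Fin n) (Fin n) ℝ) (Z : Matrix (Fin n) (Fin q) ℝ)
    (hZ : frobNorm Z = 1) : -(frobNorm S) ≤ frobInner Z (S * Z) := by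
  have hZ1 : frobInner Z Z = 1 := by
    have h : Real.sqrt (frobInner Z Z) = 1 := hZ
    rwa [Real.sqrt_eq_one] at h
  have h1 : frobInner (-Z) (S * Z) ≤ frobNorm (-Z) * frobNorm (S * Z) := aux_cs _ _
  have h2 : frobNorm (-Z) = 1 := by
    rw [← hZ]; simp [frobNorm, frobInner]
  have h3 : frobInner (-Z) (S * Z) = - frobInner Z (S * Z) := by simp [frobInner]
  have h4 : frobNorm (S * Z) ≤ frobNorm S := by
    apply Real.sqrt_le_sqrt
    rw [aux_frobInner_sum, Fintype.sum_prod_type]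
    calc ∑ i, ∑ j, (S * Z) i j * (S * Z) i j
        ≤ ∑ i, ∑ j, (∑ k, S i k ^ 2) * (∑ k, Z k j ^ 2) := by
          refine Finset.sum_le_sum fun i _ => Finset.sum_le_sum fun j _ => ?_
          rw [← pow_two, Matrix.mul_apply]
          exact Finset.sum_mul_sq_le_sq_mul_sq _ _ _
      _ = (∑ i, ∑ k, S i k ^ 2) * (∑ j, ∑ k, Z k j ^ 2) := by
          rw [Finset.sum_mul_sum]
      _ = frobInner S S := by
          have : (∑ j, ∑ k, Z k j ^ 2) = 1 := by
            rw [← hZ1, aux_frobInner_sum, Fintype.sum_prod_type_right]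
            simp [pow_two]
          rw [this, mul_one, aux_frobInner_sum, Fintype.sum_prod_type]
          simp [pow_two]
  rw [h2, one_mul] at h1
  linarith

open scoped MatrixOrder Matrix.Norms.L2Operator in
lemma aux_trace_psd {n : ℕ} {M X : Matrix (Fin n) (Fin n) ℝ} (hM : M.PosSemidef)
    (hX : X.PosSemidef) : 0 ≤ (M * X).trace := by
  obtain ⟨B, rfl⟩ := CStarAlgebra.nonneg_iff_eq_star_mul_self.mp (Matrix.nonneg_iff_posSemidef.mpr hX)
  rw [← Matrix.mul_assoc, Matrix.trace_mul_comm, ← Matrix.mul_assoc]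
  exact (hM.mul_mul_conjTranspose_same B).trace_nonneg

lemma aux_trace_adj {n m : ℕ} (A : Fin m → Matrix (Fin n) (Fin n) ℝ) (μ : Fin m → ℝ)
    (X : Matrix (Fin n) (Fin n) ℝ) : (Aadj A μ * X).trace = ∑ i, μ i * Aop A X i := by
  simp [Aadj, Aop, Finset.sum_mul, Matrix.trace_sum]

/-- a posteriori optimality gap bound via the padded point `Ỹ = [Y | 0]`:
`0 ≤ 2(f(Y) − f*) ≤ √R ‖2SY‖ − R min(λ, 0)` where `λ` is the smallest Rayleigh quotient
of the Riemannian Hessian at `Ỹ`. -/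
theorem optimality_gap_via_padded_point
    (n m p : ℕ) (hn : 0 < n) (hm : 0 < m) (hp : 0 < p)
    (A : Fin m → Matrix (Fin n) (Fin n) ℝ) (hA : ∀ i, (A i).IsSymm) (b : Fin m → ℝ)
    (C : Matrix (Fin n) (Fin n) ℝ) (hC : C.IsSymm)
    (hcompact : IsCompact (sdpFeas A b))
    (R : ℝ) (hR : R = sSup (Matrix.trace '' sdpFeas A b))
    (Y : Matrix (Fin n) (Fin p) ℝ) (hY : Y ∈ facFeas A b p)
    (μ : Fin m → ℝ) (S : Matrix (Fin n) (Fin n) ℝ) (hS : S = C - Aadj A μ)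
    (htan : (2 : ℝ) • (S * Y) ∈ tangentSet A Y)
    (Ytil : Matrix (Fin n) (Fin (p + 1)) ℝ)
    (hYtil : Ytil = Matrix.of fun i => Fin.snoc (Y i) (0 : ℝ))
    (lam : ℝ)
    (hlam : lam = sInf {t : ℝ | ∃ Zdot ∈ tangentSet A Ytil,
      frobNorm Zdot = 1 ∧ t = 2 * frobInner Zdot (S * Zdot)}) :
    Ytil ∈ facFeas A b (p + 1) ∧
    0 ≤ 2 * ((C * (Y * Yᵀ)).trace - fstar A b C) ∧
    2 * ((C * (Y * Yᵀ)).trace - fstar A b C) ≤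
      Real.sqrt R * frobNorm ((2 : ℝ) • (S * Y)) - R * min lam 0 := by
  have hpad : Ytil * Ytilᵀ = Y * Yᵀ := by
    ext i j
    simp [hYtil, Matrix.mul_apply, Fin.sum_univ_castSucc]
  have hYC : Y * Yᵀ ∈ sdpFeas A b := by
    refine ⟨?_, hY, ?_⟩
    · simp [Matrix.IsSymm, Matrix.transpose_mul]
    · simpa using Matrix.posSemidef_self_mul_conjTranspose Y
  have hcont : ∀ M : Matrix (Fin n) (Fin n) ℝ,
      Continuous (fun X : Matrix (Fin n) (Fin n) ℝ => (M * X).trace) := fun M => by fun_prop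
  have hbb : BddBelow ((fun X => (C * X).trace) '' sdpFeas A b) :=
    (hcompact.image (hcont C)).bddBelow
  have htr : ∀ X ∈ sdpFeas A b, X.trace ≤ R := fun X hX => by
    rw [hR]
    refine le_csSup (hcompact.image ?_).bddAbove ⟨X, hX, rfl⟩
    simpa using hcont 1
  have hvec : ∀ v : Fin n → ℝ, lam * (v ⬝ᵥ v) ≤ 2 * (v ⬝ᵥ (S *ᵥ v)) := by
    intro v
    by_cases hv : v = 0
    · simp [hv]
    have hpos : 0 < v ⬝ᵥ v := by
      have h0 : 0 ≤ v ⬝ᵥ v := Finset.sum_nonneg fun i _ => mul_self_nonneg _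
      exact lt_of_le_of_ne h0 fun h => hv (dotProduct_self_eq_zero.mp h.symm)
    set c : ℝ := (Real.sqrt (v ⬝ᵥ v))⁻¹ with hc
    have hc2 : c * c * (v ⬝ᵥ v) = 1 := by
      rw [hc, ← mul_inv, Real.mul_self_sqrt hpos.le, inv_mul_cancel₀ hpos.ne']
    let Z : Matrix (Fin n) (Fin (p + 1)) ℝ :=
      Matrix.of fun i => Fin.snoc (fun _ : Fin p => (0 : ℝ)) (c * v i)
    have hZY : Z * Ytilᵀ = 0 := by
      ext i j
      simp [Z, hYtil, Matrix.mul_apply, Fin.sum_univ_castSucc]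
    have hYZ : Ytil * Zᵀ = 0 := by
      have := congrArg Matrix.transpose hZY
      simpa using this
    have hZt : Z ∈ tangentSet A Ytil := by
      show Aop A (Z * Ytilᵀ + Ytil * Zᵀ) = 0
      rw [hZY, hYZ]; ext i; simp [Aop]
    have hZZ : frobInner Z Z = 1 := by
      rw [← hc2]
      simp only [frobInner, Matrix.trace, Matrix.diag, Matrix.mul_apply, Fin.sum_univ_castSucc,
        Matrix.transpose_apply, dotProduct, Finset.mul_sum]
      simp [Z]
      refine Finset.sum_congr rfl fun i _ => by ring
    have hZS : frobInner Z (S * Z) = c * c * (v ⬝ᵥ (S *ᵥ v)) := by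
      simp only [frobInner, Matrix.trace, Matrix.diag, Matrix.mul_apply, Fin.sum_univ_castSucc,
        Matrix.transpose_apply, dotProduct, Finset.mul_sum, Matrix.mulVec]
      simp [Z]
      refine Finset.sum_congr rfl fun i _ => Finset.sum_congr rfl fun j _ => by ring
    have hle : lam ≤ 2 * frobInner Z (S * Z) := by
      rw [hlam]
      refine csInf_le ⟨2 * -(frobNorm S), ?_⟩ ⟨Z, hZt, by simp [frobNorm, hZZ], rfl⟩
      rintro t ⟨W, -, hW, rfl⟩
      have := aux_bdd S W hW
      linarith
    rw [hZS] at hle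
    have h5 := mul_le_mul_of_nonneg_right hle hpos.le
    calc lam * (v ⬝ᵥ v) ≤ _ := h5
      _ = 2 * (v ⬝ᵥ (S *ᵥ v)) * (c * c * (v ⬝ᵥ v)) := by ring
      _ = _ := by rw [hc2, mul_one]
  have hSs : Sᵀ = S := by
    have h1 : (Aadj A μ)ᵀ = Aadj A μ := by
      simp only [Aadj, Matrix.transpose_sum, Matrix.transpose_smul]
      exact Finset.sum_congr rfl fun i _ => by rw [(hA i).eq]
    rw [hS, Matrix.transpose_sub, hC.eq, h1]
  have hpsd : ((2 : ℝ) • S - lam • (1 : Matrix (Fin n) (Fin n) ℝ)).PosSemidef := by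
    refine Matrix.PosSemidef.of_dotProduct_mulVec_nonneg ?_ fun v => ?_
    · simp [Matrix.IsHermitian, hSs]
    · have := hvec v
      simp [Matrix.sub_mulVec, Matrix.smul_mulVec, dotProduct_sub]
      linarith
  have hdiff : ∀ X ∈ sdpFeas A b, (C * (Y * Yᵀ)).trace - (C * X).trace
      = (S * (Y * Yᵀ)).trace - (S * X).trace := by
    intro X hX
    rw [hS, Matrix.sub_mul, Matrix.sub_mul, Matrix.trace_sub, Matrix.trace_sub, aux_trace_adj,
      aux_trace_adj, hX.2.1, hYC.2.1]
    ring
  have hSY : 2 * (S * (Y * Yᵀ)).trace ≤ Real.sqrt R * frobNorm ((2 : ℝ) • (S * Y)) := by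
    have h1 : 2 * (S * (Y * Yᵀ)).trace = frobInner Y ((2 : ℝ) • (S * Y)) := by
      rw [frobInner, Matrix.mul_smul, Matrix.trace_smul, smul_eq_mul, ← Matrix.mul_assoc,
        Matrix.trace_mul_comm]
    rw [h1]
    refine (aux_cs _ _).trans (mul_le_mul_of_nonneg_right ?_ (Real.sqrt_nonneg _))
    apply Real.sqrt_le_sqrt
    rw [frobInner, Matrix.trace_mul_comm]
    exact htr _ hYC
  refine ⟨?_, ?_, ?_⟩
  · show Aop A (Ytil * Ytilᵀ) = b
    rw [hpad]; exact hY
  · have : fstar A b C ≤ (C * (Y * Yᵀ)).trace := csInf_le hbb ⟨_, hYC, rfl⟩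
    linarith
  · have : (C * (Y * Yᵀ)).trace - (Real.sqrt R * frobNorm ((2 : ℝ) • (S * Y)) - R * min lam 0) / 2
        ≤ fstar A b C := by
      refine le_csInf ⟨_, _, hYC, rfl⟩ ?_
      rintro _ ⟨X, hX, rfl⟩
      have h1 := hdiff X hX
      have h2 := aux_trace_psd hpsd hX.2.2
      simp only [Matrix.sub_mul, Matrix.smul_mul, Matrix.one_mul, Matrix.trace_sub,
        Matrix.trace_smul, smul_eq_mul] at h2
      have h3 : 0 ≤ X.trace := hX.2.2.trace_nonneg
      have h4 : min lam 0 * X.trace ≤ lam * X.trace :=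
        mul_le_mul_of_nonneg_right (min_le_left _ _) h3
      have h5 : min lam 0 * R ≤ min lam 0 * X.trace :=
        mul_le_mul_of_nonpos_left (htr X hX) (min_le_right _ _)
      show _ ≤ (C * X).trace
      linarith
    linarith

end
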